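/- arXiv:1606.05957 — 3 statements merged into one kernel-verified Lean document; each statement's English description precedes it below -/
import Mathlib

section
/- Let λ have block structure k = (k_1,…,k_s) with n = k_1+…+k_s. Then the Gelfand–Cetlin polytope P_λ has dimension Σ_{1≤i<j≤s} k_i k_j = (n² − Σ_{i=1}^s k_i²)/2, where the dimension is that of the affine span of P_λ in ℝ^d. -/
open Classical

noncomputable section

/-- Partial sums of the (0-indexed) sequence `k`: `nseq k i = k 0 + ⋯ + k (i-1)`;
so `nseq k i` is the paper's `n_i` for the sequence `(k_1, …, k_s) = (k 0, …, k (s-1))`. -/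
def nseq (k : ℕ → ℕ) (i : ℕ) : ℕ := ∑ j ∈ Finset.range i, k j

/-- The set of terminal vertices `T_k = {(n_i, n - n_i) : 0 ≤ i ≤ s}` of the ladder diagram. -/
def terminals (s : ℕ) (k : ℕ → ℕ) : Set (ℕ × ℕ) :=
  {v | ∃ i ≤ s, v = (nseq k i, nseq k s - nseq k i)}

/-- The vertex set of the ladder diagram `Γ_k`. -/
def ladderV (s : ℕ) (k : ℕ → ℕ) : Set (ℕ × ℕ) :=
  {v | ∃ t ∈ terminals s k, v.1 ≤ t.1 ∧ v.2 ≤ t.2}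

/-- A unit grid step: one step to the right or one step up. -/
def gridStep (v w : ℕ × ℕ) : Prop :=
  w = (v.1 + 1, v.2) ∨ w = (v.1, v.2 + 1)

/-- The edge set of the ladder diagram `Γ_k`. -/
def ladderE (s : ℕ) (k : ℕ → ℕ) : Set ((ℕ × ℕ) × (ℕ × ℕ)) :=
  {e | e.1 ∈ ladderV s k ∧ e.2 ∈ ladderV s k ∧ gridStep e.1 e.2}

/-- A combinatorial (directed) graph in the grid `ℤ_{≥0} × ℤ_{≥0}`,
given by a set of vertices and a set of edges. -/
@[ext] structure LGraph where
  V : Set (ℕ × ℕ)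
  E : Set ((ℕ × ℕ) × (ℕ × ℕ))

/-- Subgraph inclusion order on grid graphs. -/
instance : PartialOrder LGraph where
  le γ γ' := γ.V ⊆ γ'.V ∧ γ.E ⊆ γ'.E
  le_refl γ := ⟨subset_rfl, subset_rfl⟩
  le_trans a b c h h' := ⟨h.1.trans h'.1, h.2.trans h'.2⟩
  le_antisymm a b h h' := LGraph.ext (subset_antisymm h.1 h'.1) (subset_antisymm h.2 h'.2)

/-- The ladder diagram `Γ_k` as a grid graph. -/
def ladder (s : ℕ) (k : ℕ → ℕ) : LGraph :=
  ⟨ladderV s k, ladderE s k⟩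

/-- A positive path: (the graph of) a shortest path in the ladder diagram `Γ_k`
from the origin `(0,0)` to a terminal vertex. -/
def IsPositivePath (s : ℕ) (k : ℕ → ℕ) (p : LGraph) : Prop :=
  ∃ (m : ℕ) (f : ℕ → ℕ × ℕ),
    f 0 = (0, 0) ∧ f m ∈ terminals s k ∧
    (∀ i < m, gridStep (f i) (f (i + 1))) ∧
    (∀ i ≤ m, f i ∈ ladderV s k) ∧
    p.V = {v | ∃ i ≤ m, v = f i} ∧
    p.E = {e | ∃ i < m, e = (f i, f (i + 1))}

/-- A face of the ladder diagram `Γ_k`: a subgraph which contains all terminal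
vertices and is a union of positive paths. -/
def IsLadderFace (s : ℕ) (k : ℕ → ℕ) (γ : LGraph) : Prop :=
  terminals s k ⊆ γ.V ∧
  ∃ P : Set LGraph, (∀ p ∈ P, IsPositivePath s k p) ∧
    γ.V = ⋃ p ∈ P, LGraph.V p ∧ γ.E = ⋃ p ∈ P, LGraph.E p

/-- The dimension (first Betti number) of a face of a ladder diagram:
`|E(γ)| - |V(γ)| + 1`. -/
def ldim (γ : LGraph) : ℤ :=
  (γ.E.ncard : ℤ) - (γ.V.ncard : ℤ) + 1

/-- The index set `I = {(i,j) : i,j ≥ 1, i+j ≤ n}` of the coordinates of a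
Gelfand–Cetlin pattern. -/
def GCIdx (n : ℕ) : Set (ℕ × ℕ) := {p | 1 ≤ p.1 ∧ 1 ≤ p.2 ∧ p.1 + p.2 ≤ n}

/-- The entries of a Gelfand–Cetlin pattern `x`, extended by the boundary
condition `x_{i, n+1-i} = λ_i`. -/
def gcEntry (n : ℕ) (lam : ℕ → ℝ) (x : GCIdx n → ℝ) (p : ℕ × ℕ) : ℝ :=
  if h : p ∈ GCIdx n then x ⟨p, h⟩ else lam p.1

/-- The Gelfand–Cetlin polytope `P_λ`: the set of points `(x_{i,j})_{(i,j) ∈ I}`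
with `x_{i,j+1} ≥ x_{i,j} ≥ x_{i+1,j}` for all `(i,j) ∈ I`, where
`x_{i,n+1-i} = λ_i`. -/
def GCPoly (n : ℕ) (lam : ℕ → ℝ) : Set (GCIdx n → ℝ) :=
  {x | ∀ i j : ℕ, (i, j) ∈ GCIdx n →
    gcEntry n lam x (i, j) ≤ gcEntry n lam x (i, j + 1) ∧
    gcEntry n lam x (i + 1, j) ≤ gcEntry n lam x (i, j)}

/-- The subset of `P_λ` obtained by turning the inequalities
`x_{i,j+1} ≥ x_{i,j}` for `(i,j) ∈ SH` and `x_{i,j} ≥ x_{i+1,j}` for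
`(i,j) ∈ SV` into equalities. -/
def GCFaceOf (n : ℕ) (lam : ℕ → ℝ) (SH SV : Set (ℕ × ℕ)) : Set (GCIdx n → ℝ) :=
  {x | x ∈ GCPoly n lam ∧
    (∀ p ∈ SH, gcEntry n lam x (p.1, p.2 + 1) = gcEntry n lam x p) ∧
    (∀ p ∈ SV, gcEntry n lam x p = gcEntry n lam x (p.1 + 1, p.2))}

/-- A face of the GC polytope: a nonempty solution set of the system obtained
by replacing some of the defining inequalities by equalities. -/
def IsGCFace (n : ℕ) (lam : ℕ → ℝ) (F : Set (GCIdx n → ℝ)) : Prop :=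
  F.Nonempty ∧ ∃ SH SV : Set (ℕ × ℕ), SH ⊆ GCIdx n ∧ SV ⊆ GCIdx n ∧
    F = GCFaceOf n lam SH SV

/-- The dimension of (a face of) the GC polytope: the dimension of its affine span. -/
def GCdim (n : ℕ) (F : Set (GCIdx n → ℝ)) : ℕ :=
  Module.finrank ℝ (affineSpan ℝ F).direction

/-- `lam` (1-indexed) is weakly decreasing with block structure `k`: it is
constant on each block `(n_{i-1}, n_i]` and strictly decreases between
consecutive blocks. -/
def HasBlockStructure (s : ℕ) (k : ℕ → ℕ) (lam : ℕ → ℝ) : Prop :=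
  (∀ i < s, ∀ a b : ℕ, nseq k i < a → a ≤ b → b ≤ nseq k (i + 1) → lam a = lam b) ∧
  (∀ i : ℕ, 1 ≤ i → i < s → lam (nseq k i + 1) < lam (nseq k i))

/-- The edge set of the graph `φ(F)` associated to a subset `F` of the GC polytope. -/
def phiE (n : ℕ) (lam : ℕ → ℝ) (F : Set (GCIdx n → ℝ)) :
    Set ((ℕ × ℕ) × (ℕ × ℕ)) :=
  {e | (∃ i < n, e = ((0, i), (0, i + 1)) ∨ e = ((i, 0), (i + 1, 0))) ∨
    (∃ i j : ℕ, (i, j) ∈ GCIdx n ∧ e = ((i - 1, j), (i, j)) ∧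
      ∃ x ∈ F, gcEntry n lam x (i, j) < gcEntry n lam x (i, j + 1)) ∨
    (∃ i j : ℕ, (i, j) ∈ GCIdx n ∧ e = ((i, j - 1), (i, j)) ∧
      ∃ x ∈ F, gcEntry n lam x (i + 1, j) < gcEntry n lam x (i, j))}

/-- The graph `φ(F)`: its edges are given by `phiE` and its vertices are the
endpoints of its edges. -/
def phiGC (n : ℕ) (lam : ℕ → ℝ) (F : Set (GCIdx n → ℝ)) : LGraph where
  V := {v | ∃ e ∈ phiE n lam F, v = e.1 ∨ v = e.2}
  E := phiE n lam F

/-- The map `ψ`: for a subgraph `γ`, the set of points of `P_λ` where the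
inequalities corresponding to the missing edges of `γ` become equalities. -/
def psiGC (n : ℕ) (lam : ℕ → ℝ) (γ : LGraph) : Set (GCIdx n → ℝ) :=
  {x | x ∈ GCPoly n lam ∧ ∀ i j : ℕ, (i, j) ∈ GCIdx n →
    (((i - 1, j), (i, j)) ∉ γ.E → gcEntry n lam x (i, j) = gcEntry n lam x (i, j + 1)) ∧
    (((i, j - 1), (i, j)) ∉ γ.E → gcEntry n lam x (i, j) = gcEntry n lam x (i + 1, j))}
/-- The recursively defined point `x̄` of the proof of Lemma 2.6 (bijectivity):
`x̄_{i,j} = λ_i` if `i + j = n + 1`, and for `i + j ≤ n` it is determined from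
`x̄_{i,j+1}` and `x̄_{i+1,j}` according to which of the two edges
`((i-1,j),(i,j))`, `((i,j-1),(i,j))` belong to `E`. -/
def barX (n : ℕ) (lam : ℕ → ℝ) (E : Set ((ℕ × ℕ) × (ℕ × ℕ))) : ℕ → ℕ → ℝ
  | i, j =>
    if h1 : n + 1 ≤ i + j then lam i
    else if h2 : ((i - 1, j), (i, j)) ∈ E then
      if h3 : ((i, j - 1), (i, j)) ∈ E then
        (barX n lam E i (j + 1) + barX n lam E (i + 1) j) / 2
      else barX n lam E (i + 1) j
    else barX n lam E i (j + 1)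
  termination_by i j => n + 1 - (i + j)
  decreasing_by all_goals omega

/-- `α, β : ℕ → ℕ` encode an element
`w = ((α_1,β_1),…,(α_{s-1},β_{s-1})) ∈ W_{s-1}`, with the conventions
`α_0 = 0`, `β_0 = 1`, `α_s = 1`, `β_s = 0`. -/
def IsW (s : ℕ) (α β : ℕ → ℕ) : Prop :=
  (∀ i : ℕ, 1 ≤ i → i < s →
    (α i, β i) = (1, 0) ∨ (α i, β i) = (0, 1) ∨ (α i, β i) = (1, 1)) ∧
  α 0 = 0 ∧ β 0 = 1 ∧ α s = 1 ∧ β s = 0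

/-- The edge set of the subgraph `g_w` of `Γ_k`: the horizontal edge into the
terminal vertex `v_i` when `α_i = 1` and the vertical edge into `v_i` when
`β_i = 1`. -/
def gwE (s : ℕ) (k α β : ℕ → ℕ) : Set ((ℕ × ℕ) × (ℕ × ℕ)) :=
  {e | ∃ i ≤ s,
    (α i = 1 ∧
      e = ((nseq k i - 1, nseq k s - nseq k i), (nseq k i, nseq k s - nseq k i))) ∨
    (β i = 1 ∧
      e = ((nseq k i, nseq k s - nseq k i - 1), (nseq k i, nseq k s - nseq k i)))}

/-- The subgraph `g_w` of `Γ_k`. -/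
def gwGraph (s : ℕ) (k α β : ℕ → ℕ) : LGraph where
  V := {v | ∃ e ∈ gwE s k α β, v = e.1 ∨ v = e.2}
  E := gwE s k α β

/-- The interleaved sequence `r_w(k) * w̃` of length `2s - 1` (0-indexed):
entry `2j` is `k''_{j+1} = k_{j+1} + 1 - α_{j+1} - β_j` and entry `2j + 1` is
`w̃_{j+1} = α_{j+1} β_{j+1}`. -/
def rstar (s : ℕ) (k α β : ℕ → ℕ) (t : ℕ) : ℕ :=
  if t % 2 = 0 then k (t / 2) + 1 - α (t / 2 + 1) - β (t / 2)
  else α (t / 2 + 1) * β (t / 2 + 1)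

/-- `α`-value of one of the three symbols `(1,0), (0,1), (1,1)`,
encoded as `0, 1, 2 : Fin 3` respectively. -/
def aW3 (c : Fin 3) : ℕ := if c = 1 then 0 else 1

/-- `β`-value of one of the three symbols `(1,0), (0,1), (1,1)`,
encoded as `0, 1, 2 : Fin 3` respectively. -/
def bW3 (c : Fin 3) : ℕ := if c = 0 then 0 else 1

/-- The function `α` of the element of `W_{s-1}` encoded by
`c : Fin (s-1) → Fin 3` (with the conventions `α_0 = 0`, `α_s = 1`). -/
def alph (s : ℕ) (c : Fin (s - 1) → Fin 3) (i : ℕ) : ℕ :=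
  if i = 0 then 0 else if h : i - 1 < s - 1 then aW3 (c ⟨i - 1, h⟩) else 1

/-- The function `β` of the element of `W_{s-1}` encoded by
`c : Fin (s-1) → Fin 3` (with the conventions `β_0 = 1`, `β_s = 0`). -/
def bet (s : ℕ) (c : Fin (s - 1) → Fin 3) (i : ℕ) : ℕ :=
  if i = 0 then 1 else if h : i - 1 < s - 1 then bW3 (c ⟨i - 1, h⟩) else 0

/-- The interleaved sequence `r_w(k) * w̃` (of length `2s - 1`, 0-indexed) for
the element `w ∈ W_{s-1}` encoded by `c`. -/
def newk (s : ℕ) (c : Fin (s - 1) → Fin 3) (k : ℕ → ℕ) (t : ℕ) : ℕ :=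
  if t % 2 = 0 then k (t / 2) + 1 - alph s c (t / 2 + 1) - bet s c (t / 2)
  else alph s c (t / 2 + 1) * bet s c (t / 2 + 1)

/-- `|w| = Σ_{i=1}^{s-1} α_i β_i` for the element `w ∈ W_{s-1}` encoded by `c`. -/
def wsize (s : ℕ) (c : Fin (s - 1) → Fin 3) : ℕ :=
  ∑ j ∈ Finset.range (s - 1), alph s c (j + 1) * bet s c (j + 1)

/-- The subgraph `g_w` of `Γ_k` for the element `w ∈ W_{s-1}` encoded by `c`. -/
def gwGraph3 (s : ℕ) (k : ℕ → ℕ) (c : Fin (s - 1) → Fin 3) : LGraph :=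
  gwGraph s k (alph s c) (bet s c)

/-- Union of two grid graphs (union of vertex sets and of edge sets). -/
def ugraph (γ δ : LGraph) : LGraph := ⟨γ.V ∪ δ.V, γ.E ∪ δ.E⟩

/-- The generating function `F_k(t) = Σ_{γ face of Γ_k} t^{dim γ}` of the
`f`-vector of the ladder diagram `Γ_k`, as a formal power series in `t`:
the coefficient of `t^d` is the number of faces of `Γ_k` of dimension `d`. -/
def fpol (s : ℕ) (k : ℕ → ℕ) : PowerSeries ℤ :=
  PowerSeries.mk fun d =>
    (Set.ncard {γ : LGraph | IsLadderFace s k γ ∧ ldim γ = (d : ℤ)} : ℤ)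

/-- The operator `Π_{i=1}^{s-1} (∂/∂x_i + ∂/∂x_{i+1} + t ∂/∂y_i)` applied to a
polynomial in the variables `x_1, x_2, … , y_1, y_2, …` (the variable `x_{i+1}`
is `Sum.inl i` and `y_{i+1}` is `Sum.inr i`) over `ℚ[t]`. -/
def Lfold (s : ℕ) (f : MvPolynomial (ℕ ⊕ ℕ) (Polynomial ℚ)) :
    MvPolynomial (ℕ ⊕ ℕ) (Polynomial ℚ) :=
  (List.range (s - 1)).foldl
    (fun g i =>
      MvPolynomial.pderiv (Sum.inl i) g + MvPolynomial.pderiv (Sum.inl (i + 1)) g +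
        (Polynomial.X : Polynomial ℚ) • MvPolynomial.pderiv (Sum.inr i) g) f

/-- The operator `D_w = Π_{i=1}^{s-1} (∂/∂x_i)^{1-α_i} (∂/∂x_{i+1})^{1-β_i}
(t ∂/∂y_i)^{α_i β_i}` for the element `w ∈ W_{s-1}` encoded by
`c : Fin (s-1) → Fin 3` (`0 ↦ (1,0)`, `1 ↦ (0,1)`, `2 ↦ (1,1)`). -/
def DfoldC (s : ℕ) (c : Fin (s - 1) → Fin 3)
    (f : MvPolynomial (ℕ ⊕ ℕ) (Polynomial ℚ)) : MvPolynomial (ℕ ⊕ ℕ) (Polynomial ℚ) :=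
  (List.finRange (s - 1)).foldl
    (fun g i =>
      if c i = 0 then MvPolynomial.pderiv (Sum.inl ((i : ℕ) + 1)) g
      else if c i = 1 then MvPolynomial.pderiv (Sum.inl (i : ℕ)) g
      else (Polynomial.X : Polynomial ℚ) • MvPolynomial.pderiv (Sum.inr (i : ℕ)) g) f

/-- The operator `D_w` for the element `w ∈ W_{s-1}` encoded by `α, β : ℕ → ℕ`. -/
def DfoldW (s : ℕ) (α β : ℕ → ℕ)
    (f : MvPolynomial (ℕ ⊕ ℕ) (Polynomial ℚ)) : MvPolynomial (ℕ ⊕ ℕ) (Polynomial ℚ) :=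
  (List.range (s - 1)).foldl
    (fun g j =>
      if α (j + 1) = 1 ∧ β (j + 1) = 1 then
        (Polynomial.X : Polynomial ℚ) • MvPolynomial.pderiv (Sum.inr j) g
      else if α (j + 1) = 1 then MvPolynomial.pderiv (Sum.inl (j + 1)) g
      else MvPolynomial.pderiv (Sum.inl j) g) f

/-- Substitution of `0` for all the variables `y_j = Sum.inr j`. -/
def setYzero :
    MvPolynomial (ℕ ⊕ ℕ) (Polynomial ℚ) →ₐ[Polynomial ℚ] MvPolynomial (ℕ ⊕ ℕ) (Polynomial ℚ) :=
  MvPolynomial.aeval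
    (Sum.elim (fun i => MvPolynomial.X (Sum.inl i)) fun _ => (0 : MvPolynomial (ℕ ⊕ ℕ) (Polynomial ℚ)))
end

/-!
The point `x_{i,j}` of `P_λ` lies between `λ_{n+1-j}` and `λ_i`, so it is constant on `P_λ` whenever
these two values agree. Conversely, writing `(a, c) = (i, n + 1 - j)` turns patterns into antitone
arrays on the triangle `a ≤ c` with diagonal `λ`. Setting such an array to `λ_c` on an upper set
`U` and to `λ_a` off `U` gives a point of `P_λ`, and the points for `U = Ici (a, c)` and
`U = Ioi (a, c)` differ in the single entry `(a, c)` whenever `λ_c < λ_a`. Hence `dim P_λ` is the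
number of pairs with `λ_c < λ_a`, that is, of pairs lying in different blocks.
-/

theorem sum_Ioc_eq_sum_range_sum_Ioc {M : Type*} [AddCommMonoid M] {u : ℕ → ℕ} (hu : Monotone u)
    (f : ℕ → M) (s : ℕ) :
    ∑ b ∈ Finset.Ioc (u 0) (u s), f b =
      ∑ j ∈ Finset.range s, ∑ b ∈ Finset.Ioc (u j) (u (j + 1)), f b := by
  induction s with
  | zero => simp
  | succ s ih =>
    rw [Finset.sum_range_succ, ← ih,
      Finset.sum_Ioc_consecutive f (hu s.zero_le) (hu s.le_succ)]

theorem two_mul_sum_range_sum_range_mul {R : Type*} [CommRing R] (f : ℕ → R) (s : ℕ) :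
    2 * ∑ j ∈ Finset.range s, ∑ i ∈ Finset.range j, f i * f j =
      (∑ i ∈ Finset.range s, f i) ^ 2 - ∑ i ∈ Finset.range s, f i ^ 2 := by
  induction s with
  | zero => simp
  | succ s ih =>
    rw [Finset.sum_range_succ, mul_add, ih, ← Finset.sum_mul, Finset.sum_range_succ,
      Finset.sum_range_succ]
    ring

section AffineSpan

variable {K ι : Type*} [Field K] [Finite ι] {P : Set (ι → K)} {S : Set ι}

theorem vectorSpan_eq_spanSubset (hconst : ∀ x ∈ P, ∀ y ∈ P, Set.EqOn x y Sᶜ)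
    (hmove : ∀ p ∈ S, ∃ x ∈ P, ∃ y ∈ P, x p ≠ y p ∧ Set.EqOn x y {p}ᶜ) :
    vectorSpan K P = Pi.spanSubset K S := by
  refine le_antisymm ?_ ?_
  · rw [vectorSpan_def, Submodule.span_le]
    rintro _ ⟨x, hx, y, hy, rfl⟩
    exact Pi.mem_spanSubset_iff.2 fun p hp => sub_eq_zero.2 (hconst x hx y hy hp)
  · rw [Pi.spanSubset, Submodule.span_le]
    rintro _ ⟨p, hp, rfl⟩
    obtain ⟨x, hx, y, hy, hne, heq⟩ := hmove p hp
    have hsingle : Pi.basisFun K ι p = (x p - y p)⁻¹ • (x - y) := by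
      ext q
      obtain rfl | hq := eq_or_ne q p
      · simp [inv_mul_cancel₀ (sub_ne_zero.2 hne)]
      · simp [hq, heq (Set.mem_compl_singleton_iff.2 hq)]
    rw [hsingle]
    exact Submodule.smul_mem _ _ (vsub_mem_vectorSpan K hx hy)

theorem finrank_direction_affineSpan_eq_ncard (hconst : ∀ x ∈ P, ∀ y ∈ P, Set.EqOn x y Sᶜ)
    (hmove : ∀ p ∈ S, ∃ x ∈ P, ∃ y ∈ P, x p ≠ y p ∧ Set.EqOn x y {p}ᶜ) :
    Module.finrank K (affineSpan K P).direction = S.ncard := by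
  rw [direction_affineSpan, vectorSpan_eq_spanSubset hconst hmove, Pi.dim_spanSubset]

end AffineSpan

section StepArray

variable {α β : Type*}

/-- The triangular array equal to `f c` at the positions `(a, c) ∈ U` and to `f a` at the others:
the extreme values allowed at each position for an antitone array with diagonal `f`. Upper sets `U`
give antitone arrays, which serve as explicit points of the polytope. -/
noncomputable def stepArray (f : α → β) (U : Set (α × α)) : α × α → β :=
  U.piecewise (fun q => f q.2) (fun q => f q.1)

theorem stepArray_diag (f : α → β) (U : Set (α × α)) (a : α) : stepArray f U (a, a) = f a := by
  simp [stepArray, Set.piecewise]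

theorem antitoneOn_stepArray [Preorder α] [Preorder β] {f : α → β} {S : Set α} {U : Set (α × α)}
    (hf : AntitoneOn f S) (hU : IsUpperSet U) :
    AntitoneOn (stepArray f U) {q | q.1 ∈ S ∧ q.2 ∈ S ∧ q.1 ≤ q.2} := by
  rintro q ⟨hq₁, hq₂, hq⟩ r ⟨hr₁, hr₂, -⟩ hqr
  by_cases hqU : q ∈ U
  · simpa [stepArray, hqU, hU hqr hqU] using hf hq₂ hr₂ hqr.2
  · by_cases hrU : r ∈ U
    · simpa [stepArray, hqU, hrU] using hf hq₁ hr₂ (hq.trans hqr.2)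
    · simpa [stepArray, hqU, hrU] using hf hq₁ hr₁ hqr.1

theorem stepArray_Ici_self [Preorder α] (f : α → β) (q : α × α) :
    stepArray f (Set.Ici q) q = f q.2 := by
  simp [stepArray]

theorem stepArray_Ioi_self [Preorder α] (f : α → β) (q : α × α) :
    stepArray f (Set.Ioi q) q = f q.1 := by
  simp [stepArray]

theorem stepArray_Ici_eq_stepArray_Ioi [PartialOrder α] (f : α → β) {q r : α × α}
    (h : r ≠ q) :
    stepArray f (Set.Ici q) r = stepArray f (Set.Ioi q) r := by
  simp [stepArray, Set.piecewise, lt_iff_le_and_ne, h.symm]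

end StepArray

section Polytope

variable {n : ℕ} {lam : ℕ → ℝ}

theorem mem_GCIdx {i j : ℕ} : (i, j) ∈ GCIdx n ↔ 1 ≤ i ∧ 1 ≤ j ∧ i + j ≤ n := Iff.rfl

theorem finite_GCIdx (n : ℕ) : (GCIdx n).Finite := by
  refine (Set.finite_Iic (n, n)).subset fun ⟨i, j⟩ hp => ?_
  rw [mem_GCIdx] at hp
  rw [Set.mem_Iic, Prod.mk_le_mk]
  omega

/-- The pair `(a, c) = (i, n + 1 - j)` attached to the coordinate `(i, j)`, so that `x_{i,j}` ranges
between `λ_c` and `λ_a`. -/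
def indexPair (p : GCIdx n) : ℕ × ℕ := (p.1.1, n + 1 - p.1.2)

theorem indexPair_injective : Function.Injective (indexPair (n := n)) := by
  rintro ⟨⟨i, j⟩, hp⟩ ⟨⟨i', j'⟩, hp'⟩ h
  rw [mem_GCIdx] at hp hp'
  simp only [indexPair, Prod.mk.injEq, Subtype.mk.injEq] at h ⊢
  omega

theorem range_indexPair :
    Set.range (indexPair (n := n)) = {q | 0 < q.1 ∧ q.1 < q.2 ∧ q.2 ≤ n} := by
  ext ⟨a, c⟩
  constructor
  · rintro ⟨⟨⟨i, j⟩, hp⟩, h⟩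
    rw [mem_GCIdx] at hp
    simp only [indexPair, Prod.mk.injEq, Set.mem_ofPred_eq] at h ⊢
    omega
  · intro h
    simp only [Set.mem_ofPred_eq] at h
    exact ⟨⟨(a, n + 1 - c), mem_GCIdx.2 (by omega)⟩, Prod.ext rfl (Nat.sub_sub_self (by omega))⟩

theorem gcEntry_comp_indexPair {f : ℕ × ℕ → ℝ} (hdiag : ∀ a, f (a, a) = lam a) {i j : ℕ}
    (hi : 1 ≤ i) (hj : 1 ≤ j) (hij : i + j ≤ n + 1) :
    gcEntry n lam (f ∘ indexPair) (i, j) = f (i, n + 1 - j) := by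
  by_cases h : (i, j) ∈ GCIdx n
  · rw [gcEntry, dif_pos h]
    rfl
  · have hboundary : n + 1 - j = i := by
      rw [mem_GCIdx] at h
      omega
    rw [gcEntry, dif_neg h, hboundary, hdiag]

theorem comp_indexPair_mem_GCPoly {f : ℕ × ℕ → ℝ} (hdiag : ∀ a, f (a, a) = lam a)
    (hf : AntitoneOn f {q | q.1 ∈ Set.Ioc 0 n ∧ q.2 ∈ Set.Ioc 0 n ∧ q.1 ≤ q.2}) :
    f ∘ indexPair ∈ GCPoly n lam := by
  intro i j hp
  obtain ⟨hi, hj, hij⟩ := mem_GCIdx.1 hp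
  rw [gcEntry_comp_indexPair hdiag hi hj (by omega),
    gcEntry_comp_indexPair hdiag hi (by omega) (by omega),
    gcEntry_comp_indexPair hdiag (by omega) hj (by omega)]
  constructor <;> apply hf <;>
    simp only [Set.mem_ofPred_eq, Set.mem_Ioc, Prod.mk_le_mk] <;> omega

theorem gcEntry_mem_Icc {x : GCIdx n → ℝ} (hx : x ∈ GCPoly n lam) {i j : ℕ} (hi : 1 ≤ i)
    (hj : 1 ≤ j) (hij : i + j ≤ n + 1) :
    gcEntry n lam x (i, j) ∈ Set.Icc (lam (n + 1 - j)) (lam i) := by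
  obtain ⟨d, hd⟩ := Nat.exists_eq_add_of_le hij
  induction d generalizing i j with
  | zero =>
    have hnot : (i, j) ∉ GCIdx n := by
      rw [mem_GCIdx]
      omega
    have hboundary : n + 1 - j = i := by omega
    simp [gcEntry, hnot, hboundary]
  | succ d ih =>
    obtain ⟨hright, hdown⟩ := hx i j (mem_GCIdx.2 (by omega))
    have hupper := (ih (i := i) (j := j + 1) hi (by omega) (by omega) (by omega)).2
    have hlower := (ih (i := i + 1) (j := j) (by omega) hj (by omega) (by omega)).1
    exact ⟨hlower.trans hdown, hright.trans hupper⟩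

theorem apply_mem_Icc_of_mem_GCPoly {x : GCIdx n → ℝ} (hx : x ∈ GCPoly n lam) (p : GCIdx n) :
    x p ∈ Set.Icc (lam (indexPair p).2) (lam (indexPair p).1) := by
  obtain ⟨⟨i, j⟩, hp⟩ := p
  have h := gcEntry_mem_Icc hx hp.1 hp.2.1 (hp.2.2.trans n.le_succ)
  rwa [gcEntry, dif_pos hp] at h

/-- The pairs `(a, c)` of indices in `{1, …, n}` with `λ_c < λ_a`; when `λ` is decreasing on
`{1, …, n}` these are the pairs `a < c` with `λ_a ≠ λ_c`. -/
noncomputable def strictPairs (n : ℕ) (lam : ℕ → ℝ) : Finset (ℕ × ℕ) :=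
  {q ∈ Finset.Ioc 0 n ×ˢ Finset.Ioc 0 n | lam q.2 < lam q.1}

theorem mem_strictPairs {q : ℕ × ℕ} :
    q ∈ strictPairs n lam ↔ (q.1 ∈ Set.Ioc 0 n ∧ q.2 ∈ Set.Ioc 0 n) ∧ lam q.2 < lam q.1 := by
  simp [strictPairs]

theorem strictPairs_subset_range_indexPair (hlam : AntitoneOn lam (Set.Ioc 0 n)) :
    (strictPairs n lam : Set (ℕ × ℕ)) ⊆ Set.range (indexPair (n := n)) := by
  rintro ⟨a, c⟩ hq
  obtain ⟨⟨ha, hc⟩, hlt⟩ := mem_strictPairs.1 hq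
  rw [range_indexPair]
  exact ⟨ha.1, hlam.reflect_lt hc ha hlt, hc.2⟩

theorem eqOn_compl_preimage_strictPairs {x y : GCIdx n → ℝ} (hx : x ∈ GCPoly n lam)
    (hy : y ∈ GCPoly n lam) : Set.EqOn x y (indexPair ⁻¹' (strictPairs n lam))ᶜ := by
  intro p hp
  have hle : lam (indexPair p).1 ≤ lam (indexPair p).2 := by
    obtain ⟨ha, hac, hc⟩ := range_indexPair.subset (Set.mem_range_self p)
    exact not_lt.1 fun hlt => hp <|
      mem_strictPairs.2 ⟨⟨⟨ha, hac.le.trans hc⟩, ha.trans hac, hc⟩, hlt⟩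
  obtain ⟨hx₁, hx₂⟩ := apply_mem_Icc_of_mem_GCPoly hx p
  obtain ⟨hy₁, hy₂⟩ := apply_mem_Icc_of_mem_GCPoly hy p
  exact le_antisymm (hx₂.trans (hle.trans hy₁)) (hy₂.trans (hle.trans hx₁))

theorem exists_mem_GCPoly_eqOn_compl_singleton (hlam : AntitoneOn lam (Set.Ioc 0 n)) {p : GCIdx n}
    (hp : lam (indexPair p).2 ≠ lam (indexPair p).1) :
    ∃ x ∈ GCPoly n lam, ∃ y ∈ GCPoly n lam, x p ≠ y p ∧ Set.EqOn x y {p}ᶜ := by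
  have hmem {U : Set (ℕ × ℕ)} (hU : IsUpperSet U) : stepArray lam U ∘ indexPair ∈ GCPoly n lam :=
    comp_indexPair_mem_GCPoly (stepArray_diag lam U) (antitoneOn_stepArray hlam hU)
  refine ⟨_, hmem (isUpperSet_Ici (indexPair p)), _, hmem (isUpperSet_Ioi (indexPair p)), ?_, ?_⟩
  · simpa only [Function.comp_apply, stepArray_Ici_self, stepArray_Ioi_self] using hp
  · exact fun q hq => stepArray_Ici_eq_stepArray_Ioi lam (indexPair_injective.ne hq)

theorem GCdim_GCPoly (hlam : AntitoneOn lam (Set.Ioc 0 n)) :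
    GCdim n (GCPoly n lam) = (strictPairs n lam).card := by
  have : Finite (GCIdx n) := (finite_GCIdx n).to_subtype
  calc GCdim n (GCPoly n lam)
      = (indexPair (n := n) ⁻¹' (strictPairs n lam)).ncard :=
        finrank_direction_affineSpan_eq_ncard
          (fun _ hx _ hy => eqOn_compl_preimage_strictPairs hx hy)
          (fun _ hp => exists_mem_GCPoly_eqOn_compl_singleton hlam (mem_strictPairs.1 hp).2.ne)
    _ = (strictPairs n lam).card := by
      rw [Set.ncard_preimage_of_injective_subset_range indexPair_injective
        (strictPairs_subset_range_indexPair hlam), Set.ncard_coe_finset]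

end Polytope

section Blocks

variable {s : ℕ} {k : ℕ → ℕ} {lam : ℕ → ℝ}

theorem nseq_zero (k : ℕ → ℕ) : nseq k 0 = 0 := Finset.sum_range_zero k

theorem nseq_succ (k : ℕ → ℕ) (i : ℕ) : nseq k (i + 1) = nseq k i + k i :=
  Finset.sum_range_succ k i

theorem monotone_nseq (k : ℕ → ℕ) : Monotone (nseq k) :=
  monotone_nat_of_le_succ fun i => by simp [nseq_succ]

theorem exists_mem_Ioc_nseq {a : ℕ} (ha : a ∈ Set.Ioc 0 (nseq k s)) :
    ∃ j < s, a ∈ Set.Ioc (nseq k j) (nseq k (j + 1)) := by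
  rw [← nseq_zero k, ← (monotone_nseq k).biUnion_Ico_Ioc_map_succ] at ha
  simpa only [Set.mem_iUnion, Set.mem_Ico, zero_le, true_and, exists_prop,
    Order.succ_eq_add_one] using ha

namespace HasBlockStructure

theorem antitoneOn (h : HasBlockStructure s k lam) : AntitoneOn lam (Set.Ioc 0 (nseq k s)) := by
  refine antitoneOn_of_add_one_le Set.ordConnected_Ioc fun a _ ha ha' => ?_
  obtain ⟨j, hj, hja, haj⟩ := exists_mem_Ioc_nseq ha
  obtain hlt | rfl := haj.lt_or_eq
  · exact (h.1 j hj a (a + 1) hja a.le_succ hlt).ge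
  · have hjs : j + 1 < s := (monotone_nseq k).reflect_lt ha'.2
    exact (h.2 (j + 1) j.succ_pos hjs).le

theorem lt_iff_le_nseq (h : HasBlockStructure s k lam) {a b j : ℕ} (hj : j < s)
    (ha : a ∈ Set.Ioc 0 (nseq k s)) (hb : b ∈ Set.Ioc (nseq k j) (nseq k (j + 1))) :
    lam b < lam a ↔ a ≤ nseq k j := by
  have hbs : b ≤ nseq k s := hb.2.trans (monotone_nseq k hj)
  constructor
  · intro hlt
    by_contra! hja
    have hab : a ≤ b := (h.antitoneOn.reflect_lt ⟨by have := hb.1; omega, hbs⟩ ha hlt).le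
    exact hlt.ne' (h.1 j hj a b hja hab hb.2)
  · intro haj
    have hjpos : 1 ≤ j := Nat.one_le_iff_ne_zero.2 fun h0 => by
      simp only [h0, nseq_zero] at haj
      exact absurd ha.1 haj.not_gt
    calc lam b ≤ lam (nseq k j + 1) :=
          h.antitoneOn ⟨by omega, hb.1.trans_le hbs⟩ ⟨(Nat.zero_le _).trans_lt hb.1, hbs⟩ hb.1
      _ < lam (nseq k j) := h.2 j hjpos hj
      _ ≤ lam a := h.antitoneOn ha ⟨ha.1.trans_le haj, monotone_nseq k hj.le⟩ haj

theorem card_filter_lt (h : HasBlockStructure s k lam) {b j : ℕ} (hj : j < s)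
    (hb : b ∈ Set.Ioc (nseq k j) (nseq k (j + 1))) :
    ({a ∈ Finset.Ioc 0 (nseq k s) | lam b < lam a} : Finset ℕ).card = nseq k j := by
  have hfilter : ({a ∈ Finset.Ioc 0 (nseq k s) | lam b < lam a} : Finset ℕ) =
      Finset.Ioc 0 (nseq k j) := by
    ext a
    have hjs : nseq k j ≤ nseq k s := monotone_nseq k hj.le
    have hiff (ha : a ∈ Set.Ioc 0 (nseq k s)) := h.lt_iff_le_nseq hj ha hb
    simp only [Finset.mem_filter, Finset.mem_Ioc]
    exact ⟨fun ⟨ha, hlt⟩ => ⟨ha.1, (hiff ha).1 hlt⟩,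
      fun ⟨ha, haj⟩ => ⟨⟨ha, haj.trans hjs⟩, (hiff ⟨ha, haj.trans hjs⟩).2 haj⟩⟩
  rw [hfilter, Nat.card_Ioc, Nat.sub_zero]

theorem card_strictPairs (h : HasBlockStructure s k lam) :
    (strictPairs (nseq k s) lam).card =
      ∑ j ∈ Finset.range s, ∑ i ∈ Finset.range j, k i * k j := by
  calc (strictPairs (nseq k s) lam).card
      = ∑ b ∈ Finset.Ioc 0 (nseq k s),
          ({a ∈ Finset.Ioc 0 (nseq k s) | lam b < lam a} : Finset ℕ).card := by
        simp only [strictPairs, Finset.card_filter, Finset.sum_product_right]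
    _ = ∑ j ∈ Finset.range s, ∑ b ∈ Finset.Ioc (nseq k j) (nseq k (j + 1)),
          ({a ∈ Finset.Ioc 0 (nseq k s) | lam b < lam a} : Finset ℕ).card := by
        rw [← sum_Ioc_eq_sum_range_sum_Ioc (monotone_nseq k), nseq_zero]
    _ = ∑ j ∈ Finset.range s, ∑ _b ∈ Finset.Ioc (nseq k j) (nseq k (j + 1)), nseq k j :=
        Finset.sum_congr rfl fun j hj => Finset.sum_congr rfl fun b hb =>
          h.card_filter_lt (Finset.mem_range.1 hj) (Finset.mem_Ioc.1 hb)
    _ = ∑ j ∈ Finset.range s, ∑ i ∈ Finset.range j, k i * k j :=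
        Finset.sum_congr rfl fun j _ => by
          rw [Finset.sum_const, Nat.card_Ioc, nseq_succ, Nat.add_sub_cancel_left, smul_eq_mul,
            mul_comm, nseq, Finset.sum_mul]

end HasBlockStructure

end Blocks

/-- The Gelfand–Cetlin polytope `P_λ` has dimension
`Σ_{1 ≤ i < j ≤ s} k_i k_j = (n² - Σ_i k_i²)/2`. -/
theorem gcPoly_dim (s : ℕ) (hs : 1 ≤ s) (k : ℕ → ℕ) (hk : ∀ i < s, 0 < k i)
    (lam : ℕ → ℝ) (hlam : HasBlockStructure s k lam) :
    (GCdim (nseq k s) (GCPoly (nseq k s) lam) : ℤ) =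
      ∑ j ∈ Finset.range s, ∑ i ∈ Finset.range j, (k i : ℤ) * (k j : ℤ) ∧
    2 * ∑ j ∈ Finset.range s, ∑ i ∈ Finset.range j, (k i : ℤ) * (k j : ℤ) =
      (nseq k s : ℤ) ^ 2 - ∑ i ∈ Finset.range s, (k i : ℤ) ^ 2 := by
  constructor
  · exact_mod_cast (GCdim_GCPoly hlam.antitoneOn).trans hlam.card_strictPairs
  · rw [two_mul_sum_range_sum_range_mul, nseq, Nat.cast_sum]
end

section
/- Let k = (k_1,…,k_s) be a sequence of positive integers and let γ, γ′ be faces of the ladder diagram Γ_k with γ ⊊ γ′ (strict inclusion of subgraphs). Then dim γ < dim γ′, i.e., |E(γ)| − |V(γ)| + 1 < |E(γ′)| − |V(γ′)| + 1. -/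
open Classical

/-!
Call a vertex or an edge of `γ'` new if it is not in `γ`. The origin lies in `γ`, so every new vertex
is the head of the last edge of a path from the origin in `γ'`, and this edge is new because its
head is. Thus there are at least as many new edges with new head as there are new vertices. The
inequality `dim γ < dim γ'` is strict because there is also a new edge whose head is old: if some
vertex is new, the path from it to a terminal vertex has to enter `γ`, and otherwise every new edge
has an old head.
-/

section Digraph

variable {α : Type*}

/-- Reachability in the directed graph with edge set `E`: there is a directed path, possibly of
length zero, from the first vertex to the second. -/
def Reaches (E : Set (α × α)) : α → α → Prop :=
  Relation.ReflTransGen fun u v ↦ (u, v) ∈ E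

theorem Reaches.mono {E E' : Set (α × α)} {u v : α} (h : Reaches E u v) (hE : E ⊆ E') :
    Reaches E' u v :=
  Relation.ReflTransGen.mono (fun _ _ huv ↦ hE huv) _ _ h

theorem Reaches.exists_edge_to_of_ne {E : Set (α × α)} {u v : α} (h : Reaches E u v)
    (hne : u ≠ v) : ∃ w, (w, v) ∈ E := by
  obtain rfl | ⟨w, -, hwv⟩ := h.cases_tail
  · exact absurd rfl hne
  · exact ⟨w, hwv⟩

theorem Reaches.exists_edge_entering {E : Set (α × α)} {S : Set α} {u v : α} (h : Reaches E u v)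
    (hu : u ∉ S) (hv : v ∈ S) : ∃ e ∈ E, e.1 ∉ S ∧ e.2 ∈ S := by
  induction h with
  | refl => exact absurd hv hu
  | @tail b c _ hbc ih =>
    by_cases hb : b ∈ S
    · exact ih hb
    · exact ⟨(b, c), hbc, hb, hv⟩

theorem reaches_of_forall_succ {E : Set (α × α)} {f : ℕ → α} {i j : ℕ} (hij : i ≤ j)
    (hf : ∀ l, i ≤ l → l < j → (f l, f (l + 1)) ∈ E) : Reaches E (f i) (f j) :=
  Relation.ReflTransGen.lift f (fun _ _ h ↦ h) _ _ <|
    reflTransGen_of_succ_of_le (fun a b ↦ (f a, f b) ∈ E) (fun l hl ↦ hf l hl.1 hl.2) hij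

variable {V V' : Set α} {E E' : Set (α × α)}

theorem sdiff_subset_image_snd_of_reaches (hE : E ⊆ V ×ˢ V)
    (hfrom : ∀ v ∈ V' \ V, ∃ r ∈ V, Reaches E' r v) :
    V' \ V ⊆ Prod.snd '' {e ∈ E' \ E | e.2 ∉ V} := by
  intro v hv
  obtain ⟨r, hr, hrv⟩ := hfrom v hv
  obtain ⟨w, hwv⟩ := hrv.exists_edge_to_of_ne (ne_of_mem_of_not_mem hr hv.2)
  exact ⟨(w, v), ⟨⟨hwv, fun h ↦ hv.2 (hE h).2⟩, hv.2⟩, rfl⟩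

theorem exists_edge_sdiff_snd_mem (hE : E ⊆ V ×ˢ V) (hE' : E' ⊆ V' ×ˢ V')
    (hto : ∀ v ∈ V' \ V, ∃ t ∈ V, Reaches E' v t) (hnot : ¬(V' ⊆ V ∧ E' ⊆ E)) :
    ∃ e ∈ E' \ E, e.2 ∈ V := by
  by_cases hV : V' ⊆ V
  · obtain ⟨e, he', he⟩ := Set.not_subset.1 fun h ↦ hnot ⟨hV, h⟩
    exact ⟨e, ⟨he', he⟩, hV (hE' he').2⟩
  · obtain ⟨v, hv', hv⟩ := Set.not_subset.1 hV
    obtain ⟨t, ht, hvt⟩ := hto v ⟨hv', hv⟩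
    obtain ⟨e, he', he1, he2⟩ := hvt.exists_edge_entering hv ht
    exact ⟨e, ⟨he', fun he ↦ he1 (hE he).1⟩, he2⟩

theorem ncard_sdiff_vertices_lt_ncard_sdiff_edges (hfin : (E' \ E).Finite) (hE : E ⊆ V ×ˢ V)
    (hE' : E' ⊆ V' ×ˢ V') (hfrom : ∀ v ∈ V' \ V, ∃ r ∈ V, Reaches E' r v)
    (hto : ∀ v ∈ V' \ V, ∃ t ∈ V, Reaches E' v t) (hnot : ¬(V' ⊆ V ∧ E' ⊆ E)) :
    (V' \ V).ncard < (E' \ E).ncard := by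
  obtain ⟨e, he, heV⟩ := exists_edge_sdiff_snd_mem hE hE' hto hnot
  have hssub : {e ∈ E' \ E | e.2 ∉ V} ⊂ E' \ E :=
    Set.ssubset_iff_exists.2 ⟨Set.sep_subset _ _, e, he, fun h ↦ h.2 heV⟩
  have hfin_new : {e ∈ E' \ E | e.2 ∉ V}.Finite := hfin.subset hssub.subset
  calc (V' \ V).ncard
      ≤ (Prod.snd '' {e ∈ E' \ E | e.2 ∉ V}).ncard :=
        Set.ncard_le_ncard (sdiff_subset_image_snd_of_reaches hE hfrom) (hfin_new.image _)
    _ ≤ {e ∈ E' \ E | e.2 ∉ V}.ncard := Set.ncard_image_le hfin_new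
    _ < (E' \ E).ncard := Set.ncard_lt_ncard hssub hfin

end Digraph

theorem LGraph.ldim_lt_ldim_iff {γ γ' : LGraph} (hle : γ ≤ γ') (hV : γ'.V.Finite)
    (hE : γ'.E.Finite) :
    ldim γ < ldim γ' ↔ (γ'.V \ γ.V).ncard < (γ'.E \ γ.E).ncard := by
  have hcardV := Set.ncard_sdiff_add_ncard_of_subset hle.1 hV
  have hcardE := Set.ncard_sdiff_add_ncard_of_subset hle.2 hE
  unfold ldim
  omega

theorem finite_ladderV (s : ℕ) (k : ℕ → ℕ) : (ladderV s k).Finite := by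
  have hterminals : (terminals s k).Finite :=
    ((Set.finite_Iic s).image fun i ↦ (nseq k i, nseq k s - nseq k i)).subset <| by
      rintro _ ⟨i, hi, rfl⟩
      exact ⟨i, hi, rfl⟩
  refine (hterminals.biUnion fun t _ ↦ Set.finite_Iic t).subset ?_
  rintro v ⟨t, ht, hvt⟩
  exact Set.mem_biUnion ht hvt

namespace IsPositivePath

variable {s : ℕ} {k : ℕ → ℕ} {p : LGraph}

theorem V_subset_ladderV (hp : IsPositivePath s k p) : p.V ⊆ ladderV s k := by
  obtain ⟨m, f, -, -, -, hf, hV, -⟩ := hp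
  rw [hV]
  rintro _ ⟨i, hi, rfl⟩
  exact hf i hi

theorem E_subset_prod (hp : IsPositivePath s k p) : p.E ⊆ p.V ×ˢ p.V := by
  obtain ⟨m, f, -, -, -, -, hV, hE⟩ := hp
  rw [hV, hE]
  rintro _ ⟨i, hi, rfl⟩
  exact ⟨⟨i, hi.le, rfl⟩, ⟨i + 1, hi, rfl⟩⟩

theorem origin_mem (hp : IsPositivePath s k p) : (0, 0) ∈ p.V := by
  obtain ⟨m, f, h0, -, -, -, hV, -⟩ := hp
  rw [hV]
  exact ⟨0, m.zero_le, h0.symm⟩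

theorem reaches_of_origin (hp : IsPositivePath s k p) {v : ℕ × ℕ} (hv : v ∈ p.V) :
    Reaches p.E (0, 0) v := by
  obtain ⟨m, f, h0, -, -, -, hV, hE⟩ := hp
  rw [hV] at hv
  obtain ⟨i, hi, rfl⟩ := hv
  rw [← h0, hE]
  exact reaches_of_forall_succ i.zero_le fun l _ hl ↦ ⟨l, hl.trans_le hi, rfl⟩

theorem exists_terminal_reaches (hp : IsPositivePath s k p) {v : ℕ × ℕ} (hv : v ∈ p.V) :
    ∃ t ∈ terminals s k, Reaches p.E v t := by
  obtain ⟨m, f, -, hm, -, -, hV, hE⟩ := hp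
  rw [hV] at hv
  obtain ⟨i, hi, rfl⟩ := hv
  rw [hE]
  exact ⟨f m, hm, reaches_of_forall_succ hi fun l _ hl ↦ ⟨l, hl, rfl⟩⟩

end IsPositivePath

namespace IsLadderFace

variable {s : ℕ} {k : ℕ → ℕ} {γ : LGraph}

theorem exists_path_of_mem_V (hγ : IsLadderFace s k γ) {v : ℕ × ℕ} (hv : v ∈ γ.V) :
    ∃ p ≤ γ, IsPositivePath s k p ∧ v ∈ p.V := by
  obtain ⟨-, P, hP, hV, hE⟩ := hγ
  rw [hV] at hv
  obtain ⟨p, hpP, hvp⟩ := Set.mem_iUnion₂.1 hv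
  exact ⟨p, ⟨hV ▸ Set.subset_biUnion_of_mem hpP, hE ▸ Set.subset_biUnion_of_mem hpP⟩,
    hP p hpP, hvp⟩

theorem exists_path_of_mem_E (hγ : IsLadderFace s k γ) {e : (ℕ × ℕ) × (ℕ × ℕ)} (he : e ∈ γ.E) :
    ∃ p ≤ γ, IsPositivePath s k p ∧ e ∈ p.E := by
  obtain ⟨-, P, hP, hV, hE⟩ := hγ
  rw [hE] at he
  obtain ⟨p, hpP, hep⟩ := Set.mem_iUnion₂.1 he
  exact ⟨p, ⟨hV ▸ Set.subset_biUnion_of_mem hpP, hE ▸ Set.subset_biUnion_of_mem hpP⟩,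
    hP p hpP, hep⟩

theorem E_subset_prod (hγ : IsLadderFace s k γ) : γ.E ⊆ γ.V ×ˢ γ.V := by
  intro e he
  obtain ⟨p, hpγ, hp, hep⟩ := hγ.exists_path_of_mem_E he
  exact Set.prod_mono hpγ.1 hpγ.1 (hp.E_subset_prod hep)

theorem finite_V (hγ : IsLadderFace s k γ) : γ.V.Finite := by
  refine (finite_ladderV s k).subset fun v hv ↦ ?_
  obtain ⟨p, -, hp, hvp⟩ := hγ.exists_path_of_mem_V hv
  exact hp.V_subset_ladderV hvp

theorem finite_E (hγ : IsLadderFace s k γ) : γ.E.Finite :=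
  (hγ.finite_V.prod hγ.finite_V).subset hγ.E_subset_prod

theorem origin_mem (hγ : IsLadderFace s k γ) : (0, 0) ∈ γ.V := by
  have hterminal : (nseq k 0, nseq k s - nseq k 0) ∈ γ.V := hγ.1 ⟨0, s.zero_le, rfl⟩
  obtain ⟨p, hpγ, hp, -⟩ := hγ.exists_path_of_mem_V hterminal
  exact hpγ.1 hp.origin_mem

theorem reaches_of_origin (hγ : IsLadderFace s k γ) {v : ℕ × ℕ} (hv : v ∈ γ.V) :
    Reaches γ.E (0, 0) v := by
  obtain ⟨p, hpγ, hp, hvp⟩ := hγ.exists_path_of_mem_V hv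
  exact (hp.reaches_of_origin hvp).mono hpγ.2

theorem exists_terminal_reaches (hγ : IsLadderFace s k γ) {v : ℕ × ℕ} (hv : v ∈ γ.V) :
    ∃ t ∈ terminals s k, Reaches γ.E v t := by
  obtain ⟨p, hpγ, hp, hvp⟩ := hγ.exists_path_of_mem_V hv
  obtain ⟨t, ht, hvt⟩ := hp.exists_terminal_reaches hvp
  exact ⟨t, ht, hvt.mono hpγ.2⟩

end IsLadderFace

theorem ldim_strict_mono_general {s : ℕ} {k : ℕ → ℕ} {γ γ' : LGraph}
    (hE : γ.E ⊆ γ.V ×ˢ γ.V) (horigin : (0, 0) ∈ γ.V) (hterminals : terminals s k ⊆ γ.V)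
    (hγ' : IsLadderFace s k γ') (hlt : γ < γ') : ldim γ < ldim γ' := by
  rw [LGraph.ldim_lt_ldim_iff hlt.le hγ'.finite_V hγ'.finite_E]
  refine ncard_sdiff_vertices_lt_ncard_sdiff_edges hγ'.finite_E.sdiff hE hγ'.E_subset_prod
    (fun v hv ↦ ⟨(0, 0), horigin, hγ'.reaches_of_origin hv.1⟩) (fun v hv ↦ ?_) hlt.not_ge
  obtain ⟨t, ht, hvt⟩ := hγ'.exists_terminal_reaches hv.1
  exact ⟨t, hterminals ht, hvt⟩

/-- If `γ` and `γ'` are faces of the ladder diagram `Γ_k`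
with `γ ⊊ γ'`, then `dim γ < dim γ'`. -/
theorem ldim_strict_mono (s : ℕ) (hs : 1 ≤ s) (k : ℕ → ℕ) (hk : ∀ i < s, 0 < k i)
    (γ γ' : LGraph) (hγ : IsLadderFace s k γ) (hγ' : IsLadderFace s k γ')
    (hlt : γ < γ') : ldim γ < ldim γ' :=
  ldim_strict_mono_general hγ.E_subset_prod hγ.origin_mem hγ.1 hγ' hlt
end

section
/- Let s ≥ 1, k ∈ ℤ^s_{≥0}, e ∈ ℤ^{s−1}_{≥0}, and w ∈ W_{s−1}. Consider the monomial m = (Π_{i=1}^s x_i^{k_i}/k_i!) · (Π_{j=1}^{s−1} y_j^{e_j}/e_j!) over ℚ[t]. Then D_w(m) evaluated at y_1 = … = y_{s−1} = 0 equals t^{|w|} · Π_{i=1}^s x_i^{d_w(k)_i}/d_w(k)_i! if e = w̃ and all entries of d_w(k) are nonnegative, and equals 0 otherwise. -/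
open Classical

/-! A factor of `D_w` acts on a divided monomial by lowering exponents and multiplying by a power
of `t`. If exponents range over `ℤ`, with a divided monomial having a negative exponent read as `0`,
this holds without side conditions: `∂/∂x_i` is always a shift by one unit in `x_i`. So `D_w`
multiplies by `t^|w|` and subtracts the sum of the shifts of its factors, which turns `(k, e)` into
`(d_w(k), e - w̃)`; setting `y = 0` then keeps exactly the case `e = w̃`. -/

noncomputable section

open MvPolynomial
open Finset (range)

theorem smul_eq_C_C_mul {σ K : Type*} [CommSemiring K] (c : K)
    (p : MvPolynomial σ (Polynomial K)) : c • p = C (Polynomial.C c) * p := by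
  rw [C_mul', ← Polynomial.algebraMap_eq, algebraMap_smul]

section DividedMonomial

variable {σ R : Type*} [CommSemiring R] [Algebra ℚ R]

/-- The divided power `X_i ^ n / n!`. The exponent is an integer, and the divided power is `0` for
`n < 0`, so that differentiation lowers `n` by one in all cases. -/
def dividedPower (i : σ) (n : ℤ) : MvPolynomial σ R :=
  if 0 ≤ n then (n.toNat.factorial : ℚ)⁻¹ • X i ^ n.toNat else 0

@[simp]
theorem dividedPower_zero (i : σ) : (dividedPower i 0 : MvPolynomial σ R) = 1 := by
  simp [dividedPower]

theorem dividedPower_of_neg (i : σ) {n : ℤ} (hn : n < 0) :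
    (dividedPower i n : MvPolynomial σ R) = 0 :=
  if_neg hn.not_ge

theorem dividedPower_natCast (i : σ) (n : ℕ) :
    (dividedPower i n : MvPolynomial σ R) = (n.factorial : ℚ)⁻¹ • X i ^ n := by
  simp [dividedPower]

theorem prod_dividedPower {ι : Type*} (A : Finset ι) (f : ι → σ) (a : ι → ℤ) :
    (∏ i ∈ A, dividedPower (f i) (a i) : MvPolynomial σ R) =
      if ∀ i ∈ A, 0 ≤ a i then
        (∏ i ∈ A, ((a i).toNat.factorial : ℚ))⁻¹ • ∏ i ∈ A, X (f i) ^ (a i).toNat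
      else 0 := by
  simp only [dividedPower, Finset.prod_ite_zero, Finset.prod_smul, Finset.prod_inv_distrib]

theorem pderiv_dividedPower_of_ne {i j : σ} (hji : j ≠ i) (n : ℤ) :
    pderiv i (dividedPower j n : MvPolynomial σ R) = 0 := by
  unfold dividedPower
  split_ifs
  · rw [Derivation.map_smul_of_tower, pderiv_pow, pderiv_X_of_ne hji, mul_zero, smul_zero]
  · exact map_zero _

theorem pderiv_dividedPower_self (i : σ) (n : ℤ) :
    pderiv i (dividedPower i n : MvPolynomial σ R) = dividedPower i (n - 1) := by
  rcases lt_or_ge n 0 with hn | hn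
  · rw [dividedPower_of_neg i hn, dividedPower_of_neg i (by lia), map_zero]
  lift n to ℕ using hn
  cases n with
  | zero => rw [Nat.cast_zero, dividedPower_zero, dividedPower_of_neg i (by lia), pderiv_one]
  | succ m =>
    have hfactorial : ((m + 1).factorial : ℚ)⁻¹ * (m + 1 : ℕ) = (m.factorial : ℚ)⁻¹ := by
      rw [Nat.factorial_succ, Nat.cast_mul, mul_inv_rev,
        inv_mul_cancel_right₀ (Nat.cast_ne_zero.mpr m.succ_ne_zero)]
    calc pderiv i (dividedPower i (m + 1 : ℕ) : MvPolynomial σ R)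
        = ((m + 1).factorial : ℚ)⁻¹ • (((m + 1 : ℕ) : MvPolynomial σ R) * X i ^ m) := by
          rw [dividedPower_natCast, Derivation.map_smul_of_tower, pderiv_pow, pderiv_X_self,
            mul_one, Nat.add_sub_cancel]
      _ = (m.factorial : ℚ)⁻¹ • X i ^ m := by
          rw [← nsmul_eq_mul, ← Nat.cast_smul_eq_nsmul ℚ, smul_smul, hfactorial]
      _ = dividedPower i ((m + 1 : ℕ) - 1) := by
          rw [Nat.cast_succ, add_sub_cancel_right, dividedPower_natCast]

/-- The divided monomial `∏ i, X_i ^ v_i / v_i!`, which is `0` as soon as one of the integer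
exponents `v_i` is negative. -/
def dividedMonomial (v : σ →₀ ℤ) : MvPolynomial σ R :=
  v.prod dividedPower

theorem dividedPower_mul_dividedMonomial_erase (v : σ →₀ ℤ) (i : σ) :
    (dividedPower i (v i) * dividedMonomial (v.erase i) : MvPolynomial σ R) = dividedMonomial v :=
  v.mul_prod_erase' i dividedPower dividedPower_zero

theorem pderiv_dividedMonomial_erase (v : σ →₀ ℤ) (i : σ) :
    pderiv i (dividedMonomial (v.erase i) : MvPolynomial σ R) = 0 := by
  refine Finset.prod_induction _ (fun p ↦ pderiv i p = 0)
    (fun p q hp hq ↦ by rw [pderiv_mul, hp, hq, zero_mul, mul_zero, add_zero]) pderiv_one ?_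
  intro j hj
  exact pderiv_dividedPower_of_ne (by rintro rfl; simp at hj) _

theorem pderiv_dividedMonomial (v : σ →₀ ℤ) (i : σ) :
    pderiv i (dividedMonomial v : MvPolynomial σ R) =
      dividedMonomial (v - Finsupp.single i 1) := by
  have herase : (v - Finsupp.single i 1).erase i = v.erase i := by
    rw [Finsupp.erase_sub, Finsupp.erase_single, sub_zero]
  rw [← dividedPower_mul_dividedMonomial_erase v i,
    ← dividedPower_mul_dividedMonomial_erase (v - _) i, pderiv_mul, pderiv_dividedPower_self,
    pderiv_dividedMonomial_erase, mul_zero, add_zero, herase, Finsupp.sub_apply,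
    Finsupp.single_eq_same]

end DividedMonomial

section Operator

/-- The factor `(∂/∂x_{j+1})^{1-α_{j+1}} (∂/∂x_{j+2})^{1-β_{j+1}} (t ∂/∂y_{j+1})^{α_{j+1} β_{j+1}}`
of `D_w`, in the paper's 1-based numbering of the variables. -/
def DfactorW (α β : ℕ → ℕ) (j : ℕ) (g : MvPolynomial (ℕ ⊕ ℕ) (Polynomial ℚ)) :
    MvPolynomial (ℕ ⊕ ℕ) (Polynomial ℚ) :=
  if α (j + 1) = 1 ∧ β (j + 1) = 1 then
    (Polynomial.X : Polynomial ℚ) • pderiv (Sum.inr j) g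
  else if α (j + 1) = 1 then pderiv (Sum.inl (j + 1)) g
  else pderiv (Sum.inl j) g

/-- The amount by which `DfactorW α β j` lowers the exponents of a divided monomial. -/
def shiftW (α β : ℕ → ℕ) (j : ℕ) : ℕ ⊕ ℕ →₀ ℤ :=
  Finsupp.sumElim
    (Finsupp.single j (1 - α (j + 1) : ℤ) + Finsupp.single (j + 1) (1 - β (j + 1) : ℤ))
    (Finsupp.single j (α (j + 1) * β (j + 1) : ℤ))

theorem DfactorW_smul_dividedMonomial {α β : ℕ → ℕ} {j : ℕ}
    (hj : (α (j + 1), β (j + 1)) = (1, 0) ∨ (α (j + 1), β (j + 1)) = (0, 1) ∨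
      (α (j + 1), β (j + 1)) = (1, 1))
    (c : Polynomial ℚ) (v : ℕ ⊕ ℕ →₀ ℤ) :
    DfactorW α β j (c • dividedMonomial v) =
      (c * Polynomial.X ^ (α (j + 1) * β (j + 1))) • dividedMonomial (v - shiftW α β j) := by
  simp only [Prod.mk.injEq] at hj
  rcases hj with ⟨hα, hβ⟩ | ⟨hα, hβ⟩ | ⟨hα, hβ⟩ <;>
    simp [DfactorW, shiftW, hα, hβ, pderiv_dividedMonomial, smul_smul, mul_comm]

theorem foldl_DfactorW_dividedMonomial {α β : ℕ → ℕ} {n : ℕ}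
    (hW : ∀ i, 1 ≤ i → i ≤ n →
      (α i, β i) = (1, 0) ∨ (α i, β i) = (0, 1) ∨ (α i, β i) = (1, 1))
    (v : ℕ ⊕ ℕ →₀ ℤ) :
    (List.range n).foldl (fun g j ↦ DfactorW α β j g) (dividedMonomial v) =
      (Polynomial.X ^ (∑ j ∈ range n, α (j + 1) * β (j + 1)) : Polynomial ℚ) •
        dividedMonomial (v - ∑ j ∈ range n, shiftW α β j) := by
  induction n with
  | zero => simp
  | succ n ih =>
    rw [List.range_succ, List.foldl_concat, ih fun i h1 hn ↦ hW i h1 (by lia),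
      DfactorW_smul_dividedMonomial (hW (n + 1) (by lia) le_rfl), ← pow_add, sub_sub,
      Finset.sum_range_succ, Finset.sum_range_succ]

theorem DfoldW_dividedMonomial {s : ℕ} {α β : ℕ → ℕ} (hW : IsW s α β) (v : ℕ ⊕ ℕ →₀ ℤ) :
    DfoldW s α β (dividedMonomial v) =
      (Polynomial.X ^ (∑ j ∈ range (s - 1), α (j + 1) * β (j + 1)) : Polynomial ℚ) •
        dividedMonomial (v - ∑ j ∈ range (s - 1), shiftW α β j) :=
  foldl_DfactorW_dividedMonomial (fun i h1 hi ↦ hW.1 i h1 (by lia)) v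

end Operator

section Exponents

/-- The exponent vector with `x`-exponents `a_0, …, a_{s-1}` and `y`-exponents
`b_0, …, b_{s-2}`. -/
def xyExponent (s : ℕ) (a b : ℕ → ℤ) : ℕ ⊕ ℕ →₀ ℤ :=
  Finsupp.sumElim (Finsupp.indicator (range s) fun i _ ↦ a i)
    (Finsupp.indicator (range (s - 1)) fun j _ ↦ b j)

theorem sum_shiftW_inl {s : ℕ} {α β : ℕ → ℕ} (hβ : β 0 = 1) (hα : α s = 1) {i : ℕ} (hi : i < s) :
    (∑ j ∈ range (s - 1), shiftW α β j) (Sum.inl i) = (1 - α (i + 1) : ℤ) + (1 - β i : ℤ) := by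
  have hfirst : ∑ j ∈ range (s - 1), Finsupp.single j (1 - α (j + 1) : ℤ) i = 1 - α (i + 1) := by
    rcases (show i < s - 1 ∨ i + 1 = s by lia) with h | h <;>
      simp [Finsupp.single_apply, h, hα]
  have hsecond : ∑ j ∈ range (s - 1), Finsupp.single (j + 1) (1 - β (j + 1) : ℤ) i = 1 - β i := by
    cases i with
    | zero => simp [hβ]
    | succ i => simp [Finsupp.single_apply, show i < s - 1 by lia]
  simp only [shiftW, Finsupp.finsetSum_apply, Finsupp.sumElim_inl, Finsupp.add_apply,
    Finset.sum_add_distrib, hfirst, hsecond]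

theorem sum_shiftW_inl_of_le (α β : ℕ → ℕ) {s i : ℕ} (hi : s ≤ i) :
    (∑ j ∈ range (s - 1), shiftW α β j) (Sum.inl i) = 0 := by
  simp only [shiftW, Finsupp.finsetSum_apply, Finsupp.sumElim_inl, Finsupp.add_apply]
  refine Finset.sum_eq_zero fun j hj ↦ ?_
  have hjs := Finset.mem_range.mp hj
  rw [Finsupp.single_eq_of_ne (by lia), Finsupp.single_eq_of_ne (by lia), add_zero]

theorem sum_shiftW_inr (α β : ℕ → ℕ) (n j : ℕ) :
    (∑ i ∈ range n, shiftW α β i) (Sum.inr j) =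
      if j < n then (α (j + 1) * β (j + 1) : ℤ) else 0 := by
  simp [shiftW, Finsupp.finsetSum_apply, Finsupp.single_apply]

theorem xyExponent_sub_sum_shiftW {s : ℕ} {α β : ℕ → ℕ} (hβ : β 0 = 1) (hα : α s = 1)
    (a b : ℕ → ℤ) :
    xyExponent s a b - ∑ j ∈ range (s - 1), shiftW α β j =
      xyExponent s (fun i ↦ a i + α (i + 1) + β i - 2) (fun j ↦ b j - α (j + 1) * β (j + 1)) := by
  ext (i | j)
  · rcases lt_or_ge i s with hi | hi
    · rw [Finsupp.sub_apply, sum_shiftW_inl hβ hα hi]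
      simp only [xyExponent, Finsupp.sumElim_inl, Finsupp.indicator_apply, Finset.mem_range, hi,
        dite_true]
      ring
    · rw [Finsupp.sub_apply, sum_shiftW_inl_of_le α β hi]
      simp [xyExponent, Finsupp.indicator_apply, hi.not_gt]
  · rw [Finsupp.sub_apply, sum_shiftW_inr]
    by_cases hj : j < s - 1 <;> simp [xyExponent, Finsupp.indicator_apply, hj]

theorem dividedMonomial_xyExponent {R : Type*} [CommSemiring R] [Algebra ℚ R]
    (s : ℕ) (a b : ℕ → ℤ) :
    (dividedMonomial (xyExponent s a b) : MvPolynomial (ℕ ⊕ ℕ) R) =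
      (∏ i ∈ range s, dividedPower (Sum.inl i) (a i)) *
        ∏ j ∈ range (s - 1), dividedPower (Sum.inr j) (b j) := by
  rw [dividedMonomial, xyExponent, Finsupp.prod_sumElim, Finsupp.prod_indicator_index,
    Finsupp.prod_indicator_index]
  all_goals simp

theorem dividedMonomial_xyExponent_natCast {R : Type*} [CommSemiring R] [Algebra ℚ R]
    (s : ℕ) (k e : ℕ → ℕ) :
    (dividedMonomial (xyExponent s (fun i ↦ k i) fun j ↦ e j) : MvPolynomial (ℕ ⊕ ℕ) R) =
      ((∏ i ∈ range s, ((k i).factorial : ℚ))⁻¹ *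
          (∏ j ∈ range (s - 1), ((e j).factorial : ℚ))⁻¹) •
        ((∏ i ∈ range s, X (Sum.inl i) ^ k i) * ∏ j ∈ range (s - 1), X (Sum.inr j) ^ e j) := by
  simp only [dividedMonomial_xyExponent, dividedPower_natCast, Finset.prod_smul,
    Finset.prod_inv_distrib, smul_mul_smul_comm]

theorem setYzero_dividedPower_inl (i : ℕ) (n : ℤ) :
    setYzero (dividedPower (Sum.inl i) n) = dividedPower (Sum.inl i) n := by
  have hX : setYzero (X (Sum.inl i)) = X (Sum.inl i) := aeval_X _ _
  rw [dividedPower, apply_ite setYzero, map_zero, map_rat_smul, map_pow, hX]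

theorem setYzero_dividedPower_inr (j : ℕ) (n : ℤ) :
    setYzero (dividedPower (Sum.inr j) n) = if n = 0 then 1 else 0 := by
  have hX : setYzero (X (Sum.inr j)) = 0 := aeval_X _ _
  rcases eq_or_ne n 0 with rfl | hn
  · rw [dividedPower_zero, map_one, if_pos rfl]
  rw [if_neg hn]
  rcases hn.lt_or_gt with hneg | hpos
  · rw [dividedPower_of_neg _ hneg, map_zero]
  · rw [dividedPower, if_pos hpos.le, map_rat_smul, map_pow, hX, zero_pow (by lia), smul_zero]

theorem setYzero_dividedMonomial_xyExponent (s : ℕ) (a b : ℕ → ℤ) :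
    setYzero (dividedMonomial (xyExponent s a b)) =
      if (∀ j < s - 1, b j = 0) ∧ ∀ i < s, 0 ≤ a i then
        (∏ i ∈ range s, ((a i).toNat.factorial : ℚ))⁻¹ •
          ∏ i ∈ range s, X (Sum.inl i) ^ (a i).toNat
      else 0 := by
  rw [dividedMonomial_xyExponent, map_mul, map_prod, map_prod]
  simp only [setYzero_dividedPower_inl, setYzero_dividedPower_inr, prod_dividedPower,
    Finset.prod_ite_zero, Finset.prod_const_one, Finset.mem_range, mul_ite, mul_one, mul_zero,
    ite_and]

end Exponents

end

open Classical in
/-- Lemma 3.6. For `k ∈ ℤ^s_{≥0}`, `e ∈ ℤ^{s-1}_{≥0}` and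
`w ∈ W_{s-1}`, applying `D_w` to the monomial
`Π x_i^{k_i}/k_i! · Π y_j^{e_j}/e_j!` and then setting `y = 0` yields
`t^{|w|} Π x_i^{d_w(k)_i}/d_w(k)_i!` if `e = w̃` and `d_w(k) ∈ ℤ^s_{≥0}`,
and `0` otherwise. (0-indexed: `d_w(k)_{j+1} = k_{j+1} + α_{j+1} + β_j - 2`,
with the nonnegativity condition `k_{j+1} + α_{j+1} + β_j ≥ 2`.) -/
theorem Dw_monomial (s : ℕ) (hs : 1 ≤ s) (α β : ℕ → ℕ) (hW : IsW s α β)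
    (k e : ℕ → ℕ) :
    setYzero (DfoldW s α β
      (MvPolynomial.C (Polynomial.C
          ((∏ i ∈ Finset.range s, ((k i).factorial : ℚ))⁻¹ *
           (∏ j ∈ Finset.range (s - 1), ((e j).factorial : ℚ))⁻¹)) *
        (∏ i ∈ Finset.range s, MvPolynomial.X (Sum.inl i) ^ k i) *
        (∏ j ∈ Finset.range (s - 1), MvPolynomial.X (Sum.inr j) ^ e j))) =
    if (∀ j < s - 1, e j = α (j + 1) * β (j + 1)) ∧
        (∀ j < s, 2 ≤ k j + α (j + 1) + β j) then
      MvPolynomial.C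
          (Polynomial.X ^ (∑ j ∈ Finset.range (s - 1), α (j + 1) * β (j + 1)) *
           Polynomial.C
             ((∏ j ∈ Finset.range s, ((k j + α (j + 1) + β j - 2).factorial : ℚ))⁻¹)) *
        (∏ j ∈ Finset.range s, MvPolynomial.X (Sum.inl j) ^ (k j + α (j + 1) + β j - 2))
    else 0 := by
  have ⟨_, _, hβ, hα, _⟩ := hW
  have hcond : ((∀ j < s - 1, (e j : ℤ) - α (j + 1) * β (j + 1) = 0) ∧
      ∀ i < s, (0 : ℤ) ≤ k i + α (i + 1) + β i - 2) ↔
      (∀ j < s - 1, e j = α (j + 1) * β (j + 1)) ∧ ∀ j < s, 2 ≤ k j + α (j + 1) + β j := by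
    simp only [sub_eq_zero, sub_nonneg]
    norm_cast
  have htoNat (i : ℕ) : ((k i : ℤ) + α (i + 1) + β i - 2).toNat = k i + α (i + 1) + β i - 2 := by
    lia
  rw [mul_assoc, ← smul_eq_C_C_mul, ← dividedMonomial_xyExponent_natCast,
    DfoldW_dividedMonomial hW, xyExponent_sub_sum_shiftW hβ hα, map_smul,
    setYzero_dividedMonomial_xyExponent]
  simp only [hcond, htoNat, smul_ite, smul_zero, smul_eq_C_C_mul, MvPolynomial.smul_eq_C_mul,
    MvPolynomial.C_mul, mul_assoc]
end
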